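/- Let X be a compact metric space, φ: X → X a homeomorphism and F: X → ℝ continuous. Assume (X, φ) is uniquely ergodic, i.e. there is exactly one φ-invariant Borel probability measure μ on X. Then the following are equivalent: (i) there exists an e^{βF}-conformal measure for some β ≠ 0; (ii) there exists an e^{βF}-conformal measure for every β ∈ ℝ; (iii) ∫_X F dμ = 0. -/

import Mathlib

open MeasureTheory Filter Topology

/-- A Borel probability measure `m` is `e^{βF}`-conformal for the homeomorphism `φ` if
`∫ f dm = ∫ (f ∘ φ) e^{βF} dm` for every continuous `f : X → ℝ`. -/
def IsConformalMeasure {X : Type*} [TopologicalSpace X] [MeasurableSpace X]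
    (φ : X ≃ₜ X) (F : X → ℝ) (β : ℝ) (m : Measure X) : Prop :=
  IsProbabilityMeasure m ∧
    ∀ f : X → ℝ, Continuous f →
      ∫ x, f x ∂m = ∫ x, f (φ x) * Real.exp (β * F x) ∂m

/-- A measure `ν` is `φ`-invariant if `ν(φ⁻¹(B)) = ν(B)` for all Borel sets `B`. -/
def IsInvariantMeasure {X : Type*} [TopologicalSpace X] [MeasurableSpace X]
    (φ : X ≃ₜ X) (ν : Measure X) : Prop :=
  ∀ B : Set X, MeasurableSet B → ν ((φ : X → X) ⁻¹' B) = ν B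

/-!
Call `G` admissible if an `e^G`-conformal measure exists. If `m` is `e^G`-conformal, then `m`
tilted by `e^{-u}` is conformal for `G + u - u ∘ φ`, and weak compactness of the probability
measures makes the admissible `G` a uniformly closed set. So admissibility is invariant under
adding uniform limits of coboundaries. Under unique ergodicity the Birkhoff averages of `G`
converge uniformly to `∫ G dμ`, and `G` differs from each of them by a coboundary; hence `G` is
admissible if and only if the constant `∫ G dμ` is, and the only admissible constant is `0`.
-/

section Coboundary

theorem sub_birkhoffAverage_eq_smul_sum_birkhoffSum_sub (R : Type*) {α M : Type*} [DivisionRing R]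
    [AddCommGroup M] [Module R M] (f : α → α) (g : α → M) {n : ℕ} (hn : (n : R) ≠ 0) (x : α) :
    g x - birkhoffAverage R f g n x =
      (n : R)⁻¹ • ∑ k ∈ Finset.range n, (birkhoffSum f g k x - birkhoffSum f g k (f x)) := by
  have birkhoffSum_sub_apply (k : ℕ) :
      birkhoffSum f g k x - birkhoffSum f g k (f x) = g x - g (f^[k] x) := by
    rw [← neg_sub, birkhoffSum_apply_sub_birkhoffSum, neg_sub]
  rw [Finset.sum_congr rfl fun k _ => birkhoffSum_sub_apply k, Finset.sum_sub_distrib,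
    Finset.sum_const, Finset.card_range, ← Nat.cast_smul_eq_nsmul R, smul_sub, inv_smul_smul₀ hn,
    birkhoffAverage, birkhoffSum]

variable {X : Type*} [TopologicalSpace X]

/-- The coboundary operator `u ↦ u - u ∘ T` of a topological dynamical system `T`. -/
def coboundary (T : C(X, X)) : C(X, ℝ) →ₗ[ℝ] C(X, ℝ) :=
  LinearMap.id - (ContinuousMap.compRightAlgHom ℝ ℝ T).toLinearMap

@[simp]
theorem coboundary_apply (T : C(X, X)) (u : C(X, ℝ)) (x : X) :
    coboundary T u x = u x - u (T x) :=
  rfl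

theorem continuous_birkhoffSum {M : Type*} [TopologicalSpace M] [AddCommMonoid M] [ContinuousAdd M]
    {f : X → X} (hf : Continuous f) {g : X → M} (hg : Continuous g) (n : ℕ) :
    Continuous (birkhoffSum f g n) :=
  continuous_finsetSum _ fun k _ => hg.comp (hf.iterate k)

theorem exists_coboundary_eq_sub_birkhoffAverage (T : C(X, X)) (g : C(X, ℝ)) {n : ℕ}
    (hn : n ≠ 0) : ∃ u, ∀ x, coboundary T u x = g x - birkhoffAverage ℝ T g n x := by
  let u : C(X, ℝ) := (n : ℝ)⁻¹ • ∑ k ∈ Finset.range n,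
    ⟨birkhoffSum T g k, continuous_birkhoffSum T.continuous g.continuous k⟩
  refine ⟨u, fun x => ?_⟩
  rw [sub_birkhoffAverage_eq_smul_sum_birkhoffSum_sub ℝ T g (Nat.cast_ne_zero.2 hn) x,
    Finset.sum_sub_distrib, smul_sub]
  simp [u, mul_sub]

end Coboundary

section EmpiricalMeasure

variable {X : Type*} [MeasurableSpace X]

/-- The uniform distribution on the orbit segment `x, T x, …, Tⁿ x`. Its `n + 1` points make it a
probability measure for every `n`. -/
noncomputable def empiricalMeasure (T : X → X) (n : ℕ) (x : X) : ProbabilityMeasure X :=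
  ⟨((n + 1 : ℕ) : ENNReal)⁻¹ • ∑ k ∈ Finset.range (n + 1), Measure.dirac (T^[k] x), ⟨by
    simpa using ENNReal.inv_mul_cancel (by simp) (by finiteness)⟩⟩

theorem integral_empiricalMeasure {E : Type*} [NormedAddCommGroup E] [NormedSpace ℝ E]
    [CompleteSpace E] (T : X → X) {g : X → E} (hg : StronglyMeasurable g) (n : ℕ) (x : X) :
    ∫ y, g y ∂(empiricalMeasure T n x) = birkhoffAverage ℝ T g (n + 1) x := by
  rw [empiricalMeasure, ProbabilityMeasure.coe_mk, integral_smul_measure,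
    integral_finsetSum_measure fun k _ => integrable_dirac' hg enorm_lt_top]
  simp only [integral_dirac' g _ hg, ENNReal.toReal_inv, ENNReal.toReal_natCast, birkhoffAverage,
    birkhoffSum]

variable [TopologicalSpace X] [CompactSpace X] [OpensMeasurableSpace X]

theorem dist_integral_comp_empiricalMeasure_le (T : C(X, X)) (g : C(X, ℝ)) (n : ℕ) (x : X) :
    dist (∫ y, g (T y) ∂(empiricalMeasure T n x)) (∫ y, g y ∂(empiricalMeasure T n x)) ≤
      2 * ‖g‖ / (n + 1) := by
  have average_comp : birkhoffAverage ℝ T (g.comp T) (n + 1) x =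
      birkhoffAverage ℝ T g (n + 1) (T x) := by
    simp only [birkhoffAverage, birkhoffSum, ContinuousMap.comp_apply,
      ← Function.iterate_succ_apply, Function.iterate_succ_apply']
  calc
    _ = dist (birkhoffAverage ℝ T g (n + 1) (T x)) (birkhoffAverage ℝ T g (n + 1) x) := by
      rw [← average_comp, ← integral_empiricalMeasure T g.continuous.stronglyMeasurable,
        ← integral_empiricalMeasure T (g.comp T).continuous.stronglyMeasurable]
      rfl
    _ = dist (g (T^[n + 1] x)) (g x) / (n + 1) := by
      rw [dist_birkhoffAverage_apply_birkhoffAverage, Nat.cast_succ]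
    _ ≤ 2 * ‖g‖ / (n + 1) := by
      gcongr
      exact g.dist_le_two_norm _ _

end EmpiricalMeasure

section UniqueErgodicity

variable {X : Type*} [TopologicalSpace X] [HasOuterApproxClosed X] [CompactSpace X]
  [MeasurableSpace X] [BorelSpace X]

theorem measurePreserving_of_tendsto_of_tendsto_integral_comp_sub {ι : Type*} {l : Filter ι}
    [l.NeBot] {ν : ι → ProbabilityMeasure X} {ρ : ProbabilityMeasure X} (T : C(X, X))
    (hν : Tendsto ν l (𝓝 ρ))
    (hinv : ∀ g : C(X, ℝ), Tendsto (fun i => ∫ x, g (T x) ∂(ν i) - ∫ x, g x ∂(ν i)) l (𝓝 0)) :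
    MeasurePreserving T (ρ : Measure X) ρ := by
  have T_measurable : Measurable T := T.continuous.measurable
  refine ⟨T_measurable, ?_⟩
  have := Measure.isProbabilityMeasure_map (μ := (ρ : Measure X)) T_measurable.aemeasurable
  refine ext_of_forall_integral_eq_of_IsFiniteMeasure fun g => ?_
  have tendsto_integral (h : C(X, ℝ)) :
      Tendsto (fun i => ∫ x, h x ∂(ν i)) l (𝓝 (∫ x, h x ∂ρ)) :=
    (ProbabilityMeasure.continuous_integral_continuousMap h).continuousAt.tendsto.comp hν
  rw [integral_map T_measurable.aemeasurable g.continuous.aestronglyMeasurable]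
  exact sub_eq_zero.1 <| tendsto_nhds_unique
    ((tendsto_integral (g.toContinuousMap.comp T)).sub (tendsto_integral g.toContinuousMap))
    (hinv g.toContinuousMap)

variable [T2Space X] {T : C(X, X)} {μ : Measure X} [IsProbabilityMeasure μ]

theorem tendsto_empiricalMeasure_of_unique
    (huniq : ∀ ν : Measure X, IsProbabilityMeasure ν → MeasurePreserving T ν ν → ν = μ) :
    Tendsto (fun p : ℕ × X => empiricalMeasure T p.1 p.2) (atTop ×ˢ ⊤) (𝓝 ⟨μ, inferInstance⟩) := by
  refine tendsto_nhds_of_unique_mapClusterPt fun ρ hρ => ?_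
  obtain ⟨U, hU, hUρ⟩ := mapClusterPt_iff_ultrafilter.1 hρ
  refine Subtype.ext <| huniq ρ inferInstance <|
    measurePreserving_of_tendsto_of_tendsto_integral_comp_sub T hUρ fun g => ?_
  refine squeeze_zero_norm (fun p => dist_integral_comp_empiricalMeasure_le T g p.1 p.2) ?_
  have tendsto_bound : Tendsto (fun n : ℕ => 2 * ‖g‖ / ((n : ℝ) + 1)) atTop (𝓝 0) :=
    tendsto_const_nhds.div_atTop (tendsto_natCast_atTop_atTop.atTop_add tendsto_const_nhds)
  exact tendsto_bound.comp (tendsto_fst.mono_left hU)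

theorem tendstoUniformly_birkhoffAverage_of_unique
    (huniq : ∀ ν : Measure X, IsProbabilityMeasure ν → MeasurePreserving T ν ν → ν = μ)
    (g : C(X, ℝ)) :
    TendstoUniformly (fun n => birkhoffAverage ℝ T g (n + 1)) (fun _ => ∫ x, g x ∂μ) atTop := by
  rw [← tendsto_prod_top_iff]
  simp only [Function.HasUncurry.uncurry, id,
    ← integral_empiricalMeasure T g.continuous.stronglyMeasurable]
  exact (ProbabilityMeasure.continuous_integral_continuousMap g).continuousAt.tendsto.comp
    (tendsto_empiricalMeasure_of_unique huniq)

theorem sub_const_integral_mem_closure_range_coboundary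
    (huniq : ∀ ν : Measure X, IsProbabilityMeasure ν → MeasurePreserving T ν ν → ν = μ)
    (g : C(X, ℝ)) :
    g - ContinuousMap.const X (∫ x, g x ∂μ) ∈ (coboundary T).range.topologicalClosure := by
  refine Metric.mem_closure_iff.2 fun ε hε => ?_
  obtain ⟨n, hn⟩ := (Metric.tendstoUniformly_iff.1
    (tendstoUniformly_birkhoffAverage_of_unique huniq g) ε hε).exists
  obtain ⟨u, hu⟩ := exists_coboundary_eq_sub_birkhoffAverage T g n.succ_ne_zero
  refine ⟨_, ⟨u, rfl⟩, (ContinuousMap.dist_lt_iff hε).2 fun x => ?_⟩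
  rw [hu x, ContinuousMap.sub_apply, ContinuousMap.const_apply, dist_sub_left]
  exact hn x

end UniqueErgodicity

section Conformal

variable {X : Type*} [TopologicalSpace X] [MeasurableSpace X]

theorem isInvariantMeasure_iff_measurePreserving [BorelSpace X] {φ : X ≃ₜ X} {ν : Measure X} :
    IsInvariantMeasure φ ν ↔ MeasurePreserving φ ν ν := by
  refine ⟨fun h => ⟨φ.measurable, Measure.ext fun B hB => ?_⟩,
    fun h B hB => h.measure_preimage hB.nullMeasurableSet⟩
  rw [Measure.map_apply φ.measurable hB, h B hB]

theorem isConformalMeasure_zero_of_measurePreserving [BorelSpace X] {φ : X ≃ₜ X} {μ : Measure X}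
    [IsProbabilityMeasure μ] (h : MeasurePreserving φ μ μ) : IsConformalMeasure φ 0 1 μ :=
  ⟨inferInstance, fun f _ => by simpa using (h.integral_comp φ.measurableEmbedding f).symm⟩

theorem IsConformalMeasure.const_eq_zero {φ : X ≃ₜ X} {c : ℝ} {m : Measure X}
    (hm : IsConformalMeasure φ (fun _ => c) 1 m) : c = 0 := by
  obtain ⟨_, hconf⟩ := hm
  have exp_eq_one : 1 = Real.exp c := by simpa using hconf (fun _ => 1) continuous_const
  exact Real.exp_eq_one_iff c |>.1 exp_eq_one.symm

/-- The potentials `G` for which an `e^G`-conformal measure exists; the parameter `β` of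
`IsConformalMeasure` is absorbed into `G`. -/
def conformalPotentials (φ : X ≃ₜ X) : Set C(X, ℝ) :=
  {G | ∃ m : Measure X, IsConformalMeasure φ G 1 m}

theorem smul_mem_conformalPotentials_iff {φ : X ≃ₜ X} {F : C(X, ℝ)} {β : ℝ} :
    β • F ∈ conformalPotentials φ ↔ ∃ m : Measure X, IsConformalMeasure φ F β m := by
  simp [conformalPotentials, IsConformalMeasure]

section OpensMeasurableSpace

variable [CompactSpace X] [OpensMeasurableSpace X]

theorem IsConformalMeasure.tilted_neg {φ : X ≃ₜ X} {G : X → ℝ} {m : Measure X}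
    (hm : IsConformalMeasure φ G 1 m) (u : C(X, ℝ)) :
    IsConformalMeasure φ (G + coboundary (φ : C(X, X)) u) 1 (m.tilted (-u)) := by
  obtain ⟨_, hconf⟩ := hm
  refine ⟨isProbabilityMeasure_tilted <|
    (by fun_prop : Continuous fun x => Real.exp ((-u) x)).integrable_of_hasCompactSupport
      (HasCompactSupport.of_compactSpace _), fun f hf => ?_⟩
  rw [integral_tilted, integral_tilted]
  have hconf_tilted := hconf
    (fun x => (Real.exp ((-u) x) / ∫ y, Real.exp ((-u) y) ∂m) • f x) (by fun_prop)
  refine hconf_tilted.trans (integral_congr_ae <| .of_forall fun x => ?_)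
  have exp_cocycle : Real.exp (-u (φ x)) * Real.exp (G x) =
      Real.exp (-u x) * Real.exp (G x + (u x - u (φ x))) := by
    rw [← Real.exp_add, ← Real.exp_add]
    ring_nf
  simp only [ContinuousMap.neg_apply, Pi.neg_apply, Pi.add_apply, coboundary_apply, smul_eq_mul,
    one_mul, ContinuousMap.coe_coe]
  linear_combination (f (φ x) / ∫ y, Real.exp (-u y) ∂m) * exp_cocycle

theorem continuous_integral_continuousMap_prod :
    Continuous fun p : C(X, ℝ) × ProbabilityMeasure X => ∫ x, p.1 x ∂p.2 := by
  refine continuous_prod_of_continuous_lipschitzWith _ 1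
    ProbabilityMeasure.continuous_integral_continuousMap fun ν => LipschitzWith.of_dist_le_mul ?_
  intro f g
  have integrable (h : C(X, ℝ)) : Integrable h (ν : Measure X) :=
    h.continuous.integrable_of_hasCompactSupport (HasCompactSupport.of_compactSpace h)
  rw [dist_eq_norm, ← integral_sub (integrable f) (integrable g), dist_eq_norm]
  simpa using norm_integral_le_of_norm_le_const (μ := (ν : Measure X))
    (.of_forall (f - g).norm_coe_le_norm)

end OpensMeasurableSpace

variable [T2Space X] [CompactSpace X] [BorelSpace X]

theorem isClosed_conformalPotentials (φ : X ≃ₜ X) : IsClosed (conformalPotentials φ) := by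
  let graph : Set (C(X, ℝ) × ProbabilityMeasure X) :=
    {p | ∀ f : C(X, ℝ), ∫ x, f x ∂p.2 = ∫ x, f (φ x) * Real.exp (p.1 x) ∂p.2}
  have graph_closed : IsClosed graph := by
    have continuous_weight (f : C(X, ℝ)) : Continuous fun G : C(X, ℝ) =>
        f.comp (φ : C(X, X)) * (⟨Real.exp, Real.continuous_exp⟩ : C(ℝ, ℝ)).comp G := by
      fun_prop
    simp only [graph, Set.ofPred_forall]
    exact isClosed_iInter fun f => isClosed_eq
      ((ProbabilityMeasure.continuous_integral_continuousMap f).comp continuous_snd)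
      (continuous_integral_continuousMap_prod.comp ((continuous_weight f).prodMap continuous_id))
  have fst_image_graph : Set.image Prod.fst graph = conformalPotentials φ := by
    ext G
    constructor
    · rintro ⟨⟨G, ν⟩, hν, rfl⟩
      exact ⟨ν, inferInstance, fun f hf => by simpa using hν ⟨f, hf⟩⟩
    · rintro ⟨m, hm, hconf⟩
      exact ⟨⟨G, m, hm⟩, fun f => by simpa using hconf f f.continuous, rfl⟩
  exact fst_image_graph ▸ isClosedMap_fst_of_compactSpace _ graph_closed

theorem add_mem_conformalPotentials {φ : X ≃ₜ X} {G h : C(X, ℝ)} (hG : G ∈ conformalPotentials φ)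
    (hh : h ∈ (coboundary (φ : C(X, X))).range.topologicalClosure) :
    G + h ∈ conformalPotentials φ := by
  obtain ⟨m, hm⟩ := hG
  refine closure_minimal (t := (G + ·) ⁻¹' conformalPotentials φ) ?_
    ((isClosed_conformalPotentials φ).preimage (continuous_const_add G)) hh
  rintro _ ⟨u, rfl⟩
  exact ⟨_, hm.tilted_neg u⟩

theorem mem_conformalPotentials_iff_integral_eq_zero [HasOuterApproxClosed X] {φ : X ≃ₜ X}
    {μ : Measure X} [IsProbabilityMeasure μ] (hμ : MeasurePreserving φ μ μ)
    (huniq : ∀ ν : Measure X, IsProbabilityMeasure ν → MeasurePreserving φ ν ν → ν = μ)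
    (G : C(X, ℝ)) : G ∈ conformalPotentials φ ↔ ∫ x, G x ∂μ = 0 := by
  have hG := sub_const_integral_mem_closure_range_coboundary (T := (φ : C(X, X))) huniq G
  constructor
  · intro hconf
    obtain ⟨m, hm⟩ := add_mem_conformalPotentials hconf (neg_mem hG)
    rw [neg_sub, add_sub_cancel] at hm
    exact hm.const_eq_zero
  · intro hzero
    have zero_mem : (0 : C(X, ℝ)) ∈ conformalPotentials φ :=
      ⟨μ, isConformalMeasure_zero_of_measurePreserving hμ⟩
    simpa [hzero] using add_mem_conformalPotentials zero_mem hG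

end Conformal

theorem stmt7_general {X : Type*} [TopologicalSpace X] [T2Space X] [CompactSpace X]
    [HasOuterApproxClosed X] [MeasurableSpace X] [BorelSpace X]
    (φ : X ≃ₜ X) (F : X → ℝ) (hF : Continuous F)
    (μ : Measure X) (hμprob : IsProbabilityMeasure μ) (hμinv : IsInvariantMeasure φ μ)
    (huniq : ∀ ν : Measure X, IsProbabilityMeasure ν → IsInvariantMeasure φ ν → ν = μ) :
    List.TFAE
      [ ∃ β : ℝ, β ≠ 0 ∧ ∃ m : Measure X, IsConformalMeasure φ F β m,
        ∀ β : ℝ, ∃ m : Measure X, IsConformalMeasure φ F β m,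
        ∫ x, F x ∂μ = 0 ] := by
  simp only [isInvariantMeasure_iff_measurePreserving] at hμinv huniq
  have conformal_iff (β : ℝ) :
      (∃ m : Measure X, IsConformalMeasure φ F β m) ↔ β * ∫ x, F x ∂μ = 0 := by
    rw [← integral_const_mul]
    exact smul_mem_conformalPotentials_iff (F := ⟨F, hF⟩).symm.trans
      (mem_conformalPotentials_iff_integral_eq_zero hμinv huniq _)
  simp only [conformal_iff]
  tfae_have 1 → 3 := fun ⟨_, hβ, h⟩ => (mul_eq_zero.1 h).resolve_left hβ
  tfae_have 3 → 2 := fun h β => by rw [h, mul_zero]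
  tfae_have 2 → 1 := fun h => ⟨1, one_ne_zero, h 1⟩
  tfae_finish

theorem stmt7 {X : Type*} [MetricSpace X] [CompactSpace X]
    [MeasurableSpace X] [BorelSpace X]
    (φ : X ≃ₜ X) (F : X → ℝ) (hF : Continuous F)
    (μ : Measure X) (hμprob : IsProbabilityMeasure μ) (hμinv : IsInvariantMeasure φ μ)
    (huniq : ∀ ν : Measure X, IsProbabilityMeasure ν → IsInvariantMeasure φ ν → ν = μ) :
    List.TFAE
      [ ∃ β : ℝ, β ≠ 0 ∧ ∃ m : Measure X, IsConformalMeasure φ F β m,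
        ∀ β : ℝ, ∃ m : Measure X, IsConformalMeasure φ F β m,
        ∫ x, F x ∂μ = 0 ] :=
  stmt7_general φ F hF μ hμprob hμinv huniq
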